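/- Fix an integer n ≥ 3. Suppose that for all integers k ≥ 2 and all integers n−1 ≥ i_1 ≥ i_2 ≥ ⋯ ≥ i_k ≥ 0, the graphs H_j defined by H_j = C_{2n} if i_j = n−1 and H_j = P_{2i_j+3} if i_j ≤ n−2 satisfy GR(H_1,…,H_k) = |H_1| + Σ_{j=2}^{k} i_j. Then for all integers k ≥ 2 and all integers n−1 ≥ i_1 ≥ i_2 ≥ ⋯ ≥ i_k ≥ 0, the graphs H'_j defined by H'_j = P_{2n+1} if i_j = n−1 and H'_j = P_{2i_j+3} if i_j ≤ n−2 satisfy GR(H'_1,…,H'_k) = |H'_1| + Σ_{j=2}^{k} i_j. -/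

import Mathlib

/-!
Since `2 * n + 1 = 2 * (n - 1) + 3`, every `evenGraphP n m` is the path on `2 * m + 3` vertices.

*Lower bound* (independent of the hypothesis). Colour the vertices with `k` colours, using colour `0`
at most `2 * i 0 + 2` times and colour `j ≠ 0` at most `i j` times, and give each edge the larger of
the colours of its ends. No triangle is rainbow; edges of colour `0` live on `2 * i 0 + 2` vertices,
and edges of colour `j ≠ 0` are covered by `i j` vertices, whereas a path on `2 * i j + 3` vertices
has a matching of size `i j + 1`.

*Upper bound.* If `i 0 < n - 1`, the two families of graphs coincide. Otherwise the hypothesis,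
applied to all vertices but one, yields a path of the required kind or a `2n`-cycle in a colour `j`
with `i j = n - 1`. An edge of colour `j` leaving the cycle extends it to a path on `2n + 1` vertices.
If there is none, then a vertex outside the cycle sees the whole cycle in one colour: consecutive
vertices of the cycle are joined in colour `j`, so the two edges to them agree. There are
`1 + ∑ ℓ ≠ j, i ℓ` outer vertices, so for some `ℓ ≠ j` at least `i ℓ + 1` of them see the cycle in
colour `ℓ`, and alternating between them and the cycle gives a path on `2 * i ℓ + 3` vertices.
-/


/-- A Gallai coloring: an edge coloring of the complete graph on `Fin N` with colors
from `Fin k` containing no rainbow triangle. -/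
def IsGallai {N k : ℕ} (c : Sym2 (Fin N) → Fin k) : Prop :=
  ∀ x y z : Fin N, x ≠ y → y ≠ z → x ≠ z →
    c s(x, y) = c s(y, z) ∨ c s(y, z) = c s(x, z) ∨ c s(x, y) = c s(x, z)

/-- The coloring `c` of the complete graph on `Fin N` contains a copy of the graph `H`
all of whose edges have color `i`. -/
def HasMonoCopy {N k V : ℕ} (c : Sym2 (Fin N) → Fin k)
    (H : SimpleGraph (Fin V)) (i : Fin k) : Prop :=
  ∃ f : Fin V → Fin N, Function.Injective f ∧ ∀ u v, H.Adj u v → c s(f u, f v) = i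

/-- Every Gallai k-coloring of the complete graph on `N` vertices contains a
monochromatic copy of `(H i)` in color `i` for some color `i`. -/
def GallaiRamseyProp {k : ℕ} (H : Fin k → Σ V : ℕ, SimpleGraph (Fin V)) (N : ℕ) : Prop :=
  ∀ c : Sym2 (Fin N) → Fin k, IsGallai c → ∃ i : Fin k, HasMonoCopy c (H i).2 i

/-- For `m ≤ n - 1`: the cycle `C_{2n}` if `m = n - 1`, and the path `P_{2m+3}` otherwise. -/
def evenGraphC (n m : ℕ) : Σ V : ℕ, SimpleGraph (Fin V) :=
  if m = n - 1 then ⟨2 * n, SimpleGraph.cycleGraph (2 * n)⟩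
  else ⟨2 * m + 3, SimpleGraph.pathGraph (2 * m + 3)⟩

/-- For `m ≤ n - 1`: the path `P_{2n+1}` if `m = n - 1`, and the path `P_{2m+3}` otherwise. -/
def evenGraphP (n m : ℕ) : Σ V : ℕ, SimpleGraph (Fin V) :=
  if m = n - 1 then ⟨2 * n + 1, SimpleGraph.pathGraph (2 * n + 1)⟩
  else ⟨2 * m + 3, SimpleGraph.pathGraph (2 * m + 3)⟩

lemma evenGraphP_eq {n m : ℕ} (hn : 3 ≤ n) :
    evenGraphP n m = ⟨2 * m + 3, SimpleGraph.pathGraph (2 * m + 3)⟩ := by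
  unfold evenGraphP
  split_ifs with h
  · have : 2 * n + 1 = 2 * m + 3 := by omega
    rw [this]
  · rfl

lemma hasMonoCopy_path {N k L : ℕ} {c : Sym2 (Fin N) → Fin k} {j : Fin k} (g : ℕ → Fin N)
    (hinj : ∀ s t, s < L → t < L → g s = g t → s = t)
    (hc : ∀ t, t + 1 < L → c s(g t, g (t + 1)) = j) :
    HasMonoCopy c (SimpleGraph.pathGraph L) j := by
  refine ⟨fun x => g x, fun x y h => Fin.ext (hinj _ _ x.2 y.2 h), fun u v h => ?_⟩
  rw [SimpleGraph.pathGraph_adj] at h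
  rcases h with h | h
  · have := hc u (by omega)
    rwa [h] at this
  · have := hc v (by omega)
    rw [h] at this
    rwa [Sym2.eq_swap]

lemma path_of_hasMonoCopy {N k L : ℕ} {c : Sym2 (Fin N) → Fin k} {j : Fin k}
    (h : HasMonoCopy c (SimpleGraph.pathGraph L) j) :
    ∃ f : Fin L → Fin N, Function.Injective f ∧
      ∀ t (ht : t + 1 < L), c s(f ⟨t, by omega⟩, f ⟨t + 1, ht⟩) = j := by
  obtain ⟨f, hf, hc⟩ := h
  exact ⟨f, hf, fun t ht => hc _ _ (by rw [SimpleGraph.pathGraph_adj]; simp)⟩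

/-- The edge colouring induced by a vertex colouring `g`: an edge gets the larger of the colours of
its two ends. -/
def maxColoring {N k : ℕ} (g : Fin N → Fin k) : Sym2 (Fin N) → Fin k :=
  Sym2.lift ⟨fun x y => max (g x) (g y), fun _ _ => max_comm _ _⟩

lemma isGallai_maxColoring {N k : ℕ} (g : Fin N → Fin k) : IsGallai (maxColoring g) := by
  intro x y z _ _ _
  simp only [maxColoring, Sym2.lift_mk]
  grind

lemma lower_bound {k : ℕ} (z : Fin k) (hz : ∀ j, z ≤ j) (i : Fin k → ℕ) {N : ℕ}
    (h : GallaiRamseyProp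
      (fun j => ⟨2 * i j + 3, SimpleGraph.pathGraph (2 * i j + 3)⟩) N) :
    2 * i z + 3 + ∑ j ∈ Finset.univ.erase z, i j ≤ N := by
  by_contra! hN
  let s : Fin k → ℕ := fun j => if j = z then 2 * i z + 2 else i j
  have hs : N ≤ ∑ j, s j := by
    rw [← Finset.add_sum_erase _ _ (Finset.mem_univ z)]
    have : ∑ j ∈ Finset.univ.erase z, s j = ∑ j ∈ Finset.univ.erase z, i j :=
      Finset.sum_congr rfl fun j hj => if_neg (Finset.ne_of_mem_erase hj)
    rw [this]
    simp only [s, if_true]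
    omega
  -- A vertex colouring in which colour `j` occurs at most `s j` times.
  obtain ⟨e⟩ : Nonempty (Fin N ↪ Σ j, Fin (s j)) :=
    Function.Embedding.nonempty_of_card_le (by simpa using hs)
  let g : Fin N → Fin k := fun v => (e v).1
  have hcard (j : Fin k) : (Finset.univ.filter fun v => g v = j).card ≤ s j := by
    have h1 : (Finset.univ.filter fun v => g v = j).card
        ≤ ((Finset.univ : Finset (Fin (s j))).image
          (fun x => (⟨j, x⟩ : Σ j, Fin (s j)))).card := by
      refine Finset.card_le_card_of_injOn e (fun v hv => ?_) e.injective.injOn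
      simp only [Finset.coe_filter, Finset.mem_univ, true_and, Set.mem_ofPred_eq] at hv
      subst hv
      simp only [Finset.coe_image, Finset.coe_univ, Set.image_univ]
      exact ⟨(e v).2, rfl⟩
    exact h1.trans (Finset.card_image_le.trans (by simp))
  have hfib {j : Fin k} {M : ℕ} (f : Fin M → Fin N) (hf : Function.Injective f)
      (hg : ∀ x, g (f x) = j) : M ≤ s j := by
    refine le_trans ?_ (hcard j)
    simpa using Finset.card_le_card_of_injOn (s := (Finset.univ : Finset (Fin M))) f
      (t := Finset.univ.filter fun v => g v = j) (fun x _ => by simpa using hg x) hf.injOn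
  obtain ⟨j, hj⟩ := h _ (isGallai_maxColoring g)
  dsimp only at hj
  obtain ⟨f, hf, hc⟩ := path_of_hasMonoCopy hj
  simp only [maxColoring, Sym2.lift_mk] at hc
  by_cases hjz : j = z
  · subst hjz
    have := hfib f hf fun x => by
      refine le_antisymm ?_ (hz _)
      rcases x with ⟨_ | t, ht⟩
      · exact (le_max_left _ _).trans (hc 0 (by omega)).le
      · exact (le_max_right _ _).trans (hc t ht).le
    simp [s] at this
  · have hex (t : Fin (i j + 1)) : ∃ x : Fin (2 * i j + 3), x.1 / 2 = t ∧ g (f x) = j := by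
      have := hc (2 * t) (by omega)
      rcases max_choice (g (f ⟨2 * t, by omega⟩)) (g (f ⟨2 * t + 1, by omega⟩)) with h | h
      · exact ⟨⟨2 * t, by omega⟩, by simp, by rw [← h, this]⟩
      · exact ⟨⟨2 * t + 1, by omega⟩, by simp; omega, by rw [← h, this]⟩
    choose x hx hgx using hex
    have := hfib (f ∘ x) (hf.comp fun a b hab => Fin.ext (by rw [← hx a, ← hx b, hab])) hgx
    simp [s, hjz] at this

/-- A Gallai colouring with a cycle of length `2 * n` in a colour `j` with `i j = n - 1`, and enough
further vertices, contains one of the paths. -/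
lemma path_of_cycle {n k N : ℕ} (hn : 3 ≤ n) (i : Fin k → ℕ) (hi : ∀ j, i j ≤ n - 1)
    (c : Sym2 (Fin N) → Fin k) (hc : IsGallai c) (j : Fin k) (hj : i j = n - 1)
    (hN : 2 * n + ∑ l ∈ Finset.univ.erase j, i l < N)
    (h : HasMonoCopy c (SimpleGraph.cycleGraph (2 * n)) j) :
    ∃ l, HasMonoCopy c (SimpleGraph.pathGraph (2 * i l + 3)) l := by
  obtain ⟨f, hf, hfc⟩ := h
  let F : ℕ → Fin N := fun t => f ⟨t % (2 * n), Nat.mod_lt _ (by omega)⟩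
  have hFinj : ∀ s t, F s = F t → s % (2 * n) = t % (2 * n) := fun s t h =>
    congrArg Fin.val (hf h)
  have hmod : ∀ t, (t % (2 * n) + 1 < 2 * n ∧ (t + 1) % (2 * n) = t % (2 * n) + 1) ∨
      (2 * n - t % (2 * n) = 1 ∧ (t + 1) % (2 * n) = 0) := by
    intro t
    have h1 := Nat.add_mod t 1 (2 * n)
    have h2 := Nat.mod_lt t (show 0 < 2 * n by omega)
    rw [Nat.mod_eq_of_lt (show 1 < 2 * n by omega)] at h1
    rcases Nat.lt_or_ge (t % (2 * n) + 1) (2 * n) with h3 | h3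
    · rw [Nat.mod_eq_of_lt h3] at h1
      exact .inl ⟨h3, h1⟩
    · rw [show t % (2 * n) + 1 = 2 * n by omega, Nat.mod_self] at h1
      exact .inr ⟨by omega, h1⟩
  have hFc : ∀ t, c s(F t, F (t + 1)) = j := by
    intro t
    apply hfc
    rw [SimpleGraph.cycleGraph_adj']
    right
    rw [Fin.val_sub]
    dsimp only
    rcases hmod t with ⟨h, h'⟩ | ⟨h, h'⟩
    · rw [h', show 2 * n - t % (2 * n) + (t % (2 * n) + 1) = 1 + 2 * n by omega, Nat.add_mod_right]
      exact Nat.mod_eq_of_lt (by omega)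
    · rw [h', h]
      exact Nat.mod_eq_of_lt (by omega)
  have hFne : ∀ t, F t ≠ F (t + 1) := by
    intro t h
    have := hFinj _ _ h
    rcases hmod t with ⟨_, h'⟩ | ⟨_, h'⟩ <;> omega
  let W : Finset (Fin N) := Finset.univ \ Finset.univ.image f
  have hWF : ∀ v ∈ W, ∀ t, v ≠ F t := by
    intro v hv t h
    simp only [W, Finset.mem_sdiff, Finset.mem_univ, true_and, Finset.mem_image] at hv
    exact hv ⟨_, h.symm⟩
  have hWcard : W.card = N - 2 * n := by
    rw [Finset.card_sdiff_of_subset (Finset.subset_univ _), Finset.card_image_of_injective _ hf]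
    simp
  by_cases hex : ∃ v ∈ W, ∃ t, c s(v, F t) = j
  · obtain ⟨v, hv, t, hvt⟩ := hex
    refine ⟨j, hasMonoCopy_path (fun s => if s = 0 then v else F (t + (s - 1))) ?_ ?_⟩
    · intro a b ha hb hab
      split_ifs at hab with h1 h2 h2
      · omega
      · exact absurd hab (hWF v hv _)
      · exact absurd hab.symm (hWF v hv _)
      · have h3 : (a - 1) ≡ (b - 1) [MOD 2 * n] := Nat.ModEq.add_left_cancel' t (hFinj _ _ hab)
        have := h3.eq_of_lt_of_lt (by omega) (by omega)
        omega
    · rintro (_ | a) ha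
      · simpa using hvt
      · simpa [add_assoc] using hFc (t + a)
  · push Not at hex
    have hconst : ∀ v ∈ W, ∀ t, c s(v, F t) = c s(v, F 0) := by
      intro v hv t
      induction t with
      | zero => rfl
      | succ t ih =>
        rw [← ih]
        have h0 := hFc t
        have h1 := hex v hv t
        have h2 := hex v hv (t + 1)
        rcases hc v (F t) (F (t + 1)) (hWF v hv t) (hFne t) (hWF v hv _) with h | h | h
        · exact absurd (h.trans h0) h1
        · exact absurd (h.symm.trans h0) h2
        · exact h.symm
    obtain ⟨l, hl⟩ : ∃ l, i l < (W.filter fun v => c s(v, F 0) = l).card := by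
      by_contra! hle
      have h1 : W.card = ∑ l ∈ Finset.univ.erase j, (W.filter fun v => c s(v, F 0) = l).card :=
        Finset.card_eq_sum_card_fiberwise fun v hv => by simpa using hex v hv 0
      have h2 := Finset.sum_le_sum (s := Finset.univ.erase j) fun l _ => hle l
      omega
    obtain ⟨e⟩ : Nonempty (Fin (i l + 1) ↪ (W.filter fun v => c s(v, F 0) = l)) :=
      Function.Embedding.nonempty_of_card_le (by rw [Fintype.card_fin, Fintype.card_coe]; exact hl)
    let E : ℕ → Fin N := fun t => e (Fin.ofNat _ t)
    have hE : ∀ t, E t ∈ W ∧ c s(E t, F 0) = l := fun t =>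
      Finset.mem_filter.1 (e (Fin.ofNat _ t)).2
    have hEF : ∀ s t, c s(E s, F t) = l := fun s t => by
      rw [hconst _ (hE s).1, (hE s).2]
    have hEinj : ∀ s t, s < i l + 1 → t < i l + 1 → E s = E t → s = t := by
      intro s t hs ht h
      have := congrArg Fin.val (e.injective (Subtype.ext h))
      simpa [Nat.mod_eq_of_lt hs, Nat.mod_eq_of_lt ht] using this
    have hil := hi l
    refine ⟨l, hasMonoCopy_path (fun s => if s % 2 = 0 then F (s / 2) else E (s / 2)) ?_ ?_⟩
    · intro a b ha hb hab
      split_ifs at hab with h1 h2 h2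
      · have := hFinj _ _ hab
        rw [Nat.mod_eq_of_lt (by omega), Nat.mod_eq_of_lt (by omega)] at this
        omega
      · exact absurd hab.symm (hWF _ (hE _).1 _)
      · exact absurd hab (hWF _ (hE _).1 _)
      · have := hEinj _ _ (by omega) (by omega) hab
        omega
    · intro t _
      rcases Nat.mod_two_eq_zero_or_one t with h | h
      · rw [if_pos h, if_neg (by omega), Sym2.eq_swap]
        exact hEF _ _
      · rw [if_neg (by omega), if_pos (by omega)]
        exact hEF _ _

theorem stmt_2 (n : ℕ) (hn : 3 ≤ n)
    (hyp : ∀ k : ℕ, ∀ hk : 2 ≤ k, ∀ i : Fin k → ℕ, Antitone i → i ⟨0, by omega⟩ ≤ n - 1 →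
      IsLeast {N | 0 < N ∧ GallaiRamseyProp (fun j => evenGraphC n (i j)) N}
        ((evenGraphC n (i ⟨0, by omega⟩)).1 +
          ∑ j ∈ Finset.univ.erase (⟨0, by omega⟩ : Fin k), i j)) :
    ∀ k : ℕ, ∀ hk : 2 ≤ k, ∀ i : Fin k → ℕ, Antitone i → i ⟨0, by omega⟩ ≤ n - 1 →
      IsLeast {N | 0 < N ∧ GallaiRamseyProp (fun j => evenGraphP n (i j)) N}
        ((evenGraphP n (i ⟨0, by omega⟩)).1 +
          ∑ j ∈ Finset.univ.erase (⟨0, by omega⟩ : Fin k), i j) := by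
  intro k hk i hanti hi0
  have hmin : ∀ j : Fin k, (⟨0, by omega⟩ : Fin k) ≤ j := fun j => Fin.mk_le_of_le_val (Nat.zero_le _)
  have hi : ∀ j, i j ≤ n - 1 := fun j => (hanti (hmin j)).trans hi0
  obtain ⟨⟨-, hC⟩, -⟩ := hyp k hk i hanti hi0
  simp only [evenGraphP_eq hn]
  refine ⟨⟨by omega, ?_⟩, fun N hN => lower_bound _ hmin i hN.2⟩
  generalize (⟨0, by omega⟩ : Fin k) = z at *
  by_cases hz : i z = n - 1
  · intro c hc
    have hcz : (evenGraphC n (i z)).1 = 2 * n := by simp [evenGraphC, hz]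
    rw [hcz] at hC
    let emb : Fin (2 * n + ∑ j ∈ Finset.univ.erase z, i j) →
        Fin (2 * i z + 3 + ∑ j ∈ Finset.univ.erase z, i j) := Fin.castLE (by omega)
    have hemb : Function.Injective emb := Fin.castLE_injective _
    obtain ⟨j, f, hf, hfc⟩ := hC (fun e => c (e.map emb)) fun x y w hxy hyw hxw =>
      hc _ _ _ (hemb.ne hxy) (hemb.ne hyw) (hemb.ne hxw)
    have hcopy : HasMonoCopy c (evenGraphC n (i j)).2 j := ⟨emb ∘ f, hemb.comp hf, hfc⟩
    by_cases hj : i j = n - 1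
    · rw [show evenGraphC n (i j) = ⟨2 * n, SimpleGraph.cycleGraph (2 * n)⟩ from if_pos hj] at hcopy
      refine path_of_cycle hn i hi c hc j hj ?_ hcopy
      have h1 := Finset.add_sum_erase Finset.univ i (Finset.mem_univ z)
      have h2 := Finset.add_sum_erase Finset.univ i (Finset.mem_univ j)
      omega
    · rw [show evenGraphC n (i j) = ⟨2 * i j + 3, SimpleGraph.pathGraph (2 * i j + 3)⟩ from
        if_neg hj] at hcopy
      exact ⟨j, hcopy⟩
  · have heq : ∀ j, evenGraphC n (i j) = ⟨2 * i j + 3, SimpleGraph.pathGraph (2 * i j + 3)⟩ := by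
      intro j
      have h1 := hanti (hmin j)
      have h2 := hi z
      exact if_neg (by omega)
    simpa only [heq] using hC
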